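/- (Fundamental Theorem of Asset Pricing for utility-based NGD.) Let D ⊆ 𝒫 be convex and weakly compact, and let A ⊆ L^0 be a convex, D-consistent set of attainable P&Ls. Then the model satisfies the utility-based No Good Deals condition (there exists no X ∈ A with u(X) > 0) if and only if D ∩ ℛ(A) ≠ ∅. -/

import Mathlib

open MeasureTheory Filter Set
open scoped ENNReal

variable {Ω : Type*} [MeasurableSpace Ω]

/-- Densities of probability measures absolutely continuous w.r.t. `P`. -/
def Dens (P : Measure Ω) : Set (Ω → ℝ) :=
  {Z | Measurable Z ∧ (∀ ω, 0 ≤ Z ω) ∧ ∫⁻ ω, ENNReal.ofReal (Z ω) ∂P = 1}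

/-- `E_Q[X] = E_Q[X⁺] − E_Q[X⁻]` with the convention `∞ − ∞ = −∞`, where `dQ/dP = Z`. -/
noncomputable def eexp (P : Measure Ω) (Z X : Ω → ℝ) : EReal :=
  if (∫⁻ ω, ENNReal.ofReal (-(Z ω * X ω)) ∂P) = ⊤ then ⊥
  else ((∫⁻ ω, ENNReal.ofReal (Z ω * X ω) ∂P : ℝ≥0∞) : EReal)
    - ((∫⁻ ω, ENNReal.ofReal (-(Z ω * X ω)) ∂P : ℝ≥0∞) : EReal)

/-- Coherent utility function determined by a set of densities `D`. -/
noncomputable def cohU (P : Measure Ω) (D : Set (Ω → ℝ)) (X : Ω → ℝ) : EReal :=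
  ⨅ Z ∈ D, eexp P Z X

/-- The weak `L¹`-space associated with `D`. -/
def Lw (P : Measure Ω) (D : Set (Ω → ℝ)) : Set (Ω → ℝ) :=
  {X | Measurable X ∧ ⊥ < cohU P D X ∧ ⊥ < cohU P D (fun ω => -X ω)}

noncomputable def tailSup (P : Measure Ω) (D : Set (Ω → ℝ)) (X : Ω → ℝ) (n : ℕ) : ℝ≥0∞ :=
  ⨆ Z ∈ D, ∫⁻ ω in {ω | (n : ℝ) < |X ω|}, ENNReal.ofReal (Z ω * |X ω|) ∂P

/-- The strong `L¹`-space associated with `D`. -/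
def Ls (P : Measure Ω) (D : Set (Ω → ℝ)) : Set (Ω → ℝ) :=
  {X | Measurable X ∧ Tendsto (tailSup P D X) atTop (nhds 0)}

/-- Risk-neutral densities for the set `A` of attainable P&Ls. -/
def RiskNeutral (P : Measure Ω) (A : Set (Ω → ℝ)) : Set (Ω → ℝ) :=
  {Z | Z ∈ Dens P ∧ ∀ X ∈ A, eexp P Z X ≤ 0}

/-- `A` is `D`-consistent. -/
def DConsistent (P : Measure Ω) (D A : Set (Ω → ℝ)) : Prop :=
  ∃ A' ⊆ A ∩ Ls P D, D ∩ RiskNeutral P A = D ∩ RiskNeutral P A'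

/-- Sequential compactness of `D` in the weak topology `σ(L¹, L^∞)`. -/
def WSeqCompact (P : Measure Ω) (D : Set (Ω → ℝ)) : Prop :=
  ∀ Z : ℕ → Ω → ℝ, (∀ n, Z n ∈ D) → ∃ W ∈ D, ∃ φ : ℕ → ℕ, StrictMono φ ∧
    ∀ g : Ω → ℝ, Measurable g → (∃ C : ℝ, ∀ ω, |g ω| ≤ C) →
      Tendsto (fun k => ∫ ω, Z (φ k) ω * g ω ∂P) atTop (nhds (∫ ω, W ω * g ω ∂P))

/-- `D` is closed under `L¹`-convergence (within densities). -/
def L1Closed (P : Measure Ω) (D : Set (Ω → ℝ)) : Prop :=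
  ∀ Z : ℕ → Ω → ℝ, (∀ n, Z n ∈ D) → ∀ W ∈ Dens P,
    Tendsto (fun n => ∫ ω, |Z n ω - W ω| ∂P) atTop (nhds 0) → W ∈ D

/-- Convergence of densities tested against bounded measurable functions. -/
def WeakTendsto (P : Measure Ω) (Z : ℕ → Ω → ℝ) (W : Ω → ℝ) : Prop :=
  ∀ g : Ω → ℝ, Measurable g → (∃ C : ℝ, ∀ ω, |g ω| ≤ C) →
    Tendsto (fun k => ∫ ω, Z k ω * g ω ∂P) atTop (nhds (∫ ω, W ω * g ω ∂P))

lemma Dens.integrable {P : Measure Ω} {Z : Ω → ℝ} (hZ : Z ∈ Dens P) : Integrable Z P := by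
  obtain ⟨hm, h0, h1⟩ := hZ
  refine ⟨hm.aestronglyMeasurable, ?_⟩
  rw [hasFiniteIntegral_iff_ofReal (Eventually.of_forall h0), h1]
  exact ENNReal.one_lt_top

lemma Dens.integrable_mul_bounded {P : Measure Ω} {Z g : Ω → ℝ} (hZ : Z ∈ Dens P)
    (hg : Measurable g) {C : ℝ} (hC : ∀ ω, |g ω| ≤ C) :
    Integrable (fun ω => Z ω * g ω) P :=
  (Dens.integrable hZ).mul_bdd hg.aestronglyMeasurable (Eventually.of_forall hC)

lemma eexp_eq_integral {P : Measure Ω} {Z X : Ω → ℝ}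
    (h : Integrable (fun ω => Z ω * X ω) P) :
    eexp P Z X = ((∫ ω, Z ω * X ω ∂P : ℝ) : EReal) := by
  have hpos : (∫⁻ ω, ENNReal.ofReal (Z ω * X ω) ∂P) ≠ ⊤ := h.lintegral_lt_top.ne
  have hneg : (∫⁻ ω, ENNReal.ofReal (-(Z ω * X ω)) ∂P) ≠ ⊤ := h.neg.lintegral_lt_top.ne
  rw [eexp, if_neg hneg, integral_eq_lintegral_pos_part_sub_lintegral_neg_part h,
    EReal.coe_sub, EReal.coe_ennreal_toReal hpos, EReal.coe_ennreal_toReal hneg]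

/-- The part of `X` of absolute value at most `n`. -/
noncomputable def truncate (X : Ω → ℝ) (n : ℕ) : Ω → ℝ :=
  {ω | (n : ℝ) < |X ω|}ᶜ.indicator X

lemma measurableSet_tail {X : Ω → ℝ} (hX : Measurable X) (n : ℕ) :
    MeasurableSet {ω | (n : ℝ) < |X ω|} :=
  measurableSet_lt measurable_const hX.abs

lemma measurable_truncate {X : Ω → ℝ} (hX : Measurable X) (n : ℕ) :
    Measurable (truncate X n) :=
  hX.indicator (measurableSet_tail hX n).compl

lemma abs_truncate_le {α : Type*} (X : α → ℝ) (n : ℕ) (ω : α) : |truncate X n ω| ≤ n := by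
  by_cases h : (n : ℝ) < |X ω|
  · simp [truncate, h]
  · simpa [truncate, h] using not_lt.1 h

lemma lintegral_mul_sub_truncate_le {P : Measure Ω} {D : Set (Ω → ℝ)} (hD : D ⊆ Dens P)
    {X : Ω → ℝ} (hX : Measurable X) {Z : Ω → ℝ} (hZ : Z ∈ D) (n : ℕ) :
    ∫⁻ ω, ‖Z ω * X ω - Z ω * truncate X n ω‖ₑ ∂P ≤ tailSup P D X n := by
  refine le_trans (le_of_eq ?_) (le_iSup₂_of_le Z hZ le_rfl)
  rw [← lintegral_indicator (measurableSet_tail hX n)]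
  refine lintegral_congr fun ω => ?_
  by_cases h : (n : ℝ) < |X ω|
  · have h0 : 0 ≤ Z ω := (hD hZ).2.1 ω
    simp [truncate, h, Real.enorm_eq_ofReal_abs, abs_of_nonneg h0, ENNReal.ofReal_mul h0]
  · simp [truncate, h]

lemma Ls.integrable_mul {P : Measure Ω} {D : Set (Ω → ℝ)} (hD : D ⊆ Dens P)
    {X : Ω → ℝ} (hX : X ∈ Ls P D) {Z : Ω → ℝ} (hZ : Z ∈ D) :
    Integrable (fun ω => Z ω * X ω) P := by
  obtain ⟨hXm, hX0⟩ := hX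
  obtain ⟨n, hn⟩ := (hX0.eventually_lt_const zero_lt_one).exists
  have htr := Dens.integrable_mul_bounded (hD hZ) (measurable_truncate hXm n) (abs_truncate_le X n)
  have hdiff : Integrable (fun ω => Z ω * X ω - Z ω * truncate X n ω) P := by
    refine ⟨(((hD hZ).1.mul hXm).sub
      ((hD hZ).1.mul (measurable_truncate hXm n))).aestronglyMeasurable, ?_⟩
    exact (lintegral_mul_sub_truncate_le hD hXm hZ n).trans_lt (hn.trans ENNReal.one_lt_top)
  exact (hdiff.add htr).congr (Eventually.of_forall fun ω => by simp)

lemma abs_integral_sub_truncate_le {P : Measure Ω} {D : Set (Ω → ℝ)} (hD : D ⊆ Dens P)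
    {X : Ω → ℝ} (hX : X ∈ Ls P D) {Z : Ω → ℝ} (hZ : Z ∈ D) {n : ℕ} {ε : ℝ}
    (hn : tailSup P D X n ≤ ENNReal.ofReal ε) (hε : 0 ≤ ε) :
    |(∫ ω, Z ω * X ω ∂P) - ∫ ω, Z ω * truncate X n ω ∂P| ≤ ε := by
  rw [← integral_sub (Ls.integrable_mul hD hX hZ)
    (Dens.integrable_mul_bounded (hD hZ) (measurable_truncate hX.1 n) (abs_truncate_le X n))]
  have h := (enorm_integral_le_lintegral_enorm
    (μ := P) (fun ω => Z ω * X ω - Z ω * truncate X n ω)).trans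
    ((lintegral_mul_sub_truncate_le hD hX.1 hZ n).trans hn)
  rwa [Real.enorm_eq_ofReal_abs, ENNReal.ofReal_le_ofReal_iff hε] at h

lemma WeakTendsto.tendsto_integral_mul {P : Measure Ω} {D : Set (Ω → ℝ)} (hD : D ⊆ Dens P)
    {X : Ω → ℝ} (hX : X ∈ Ls P D) {Z : ℕ → Ω → ℝ} {W : Ω → ℝ} (hZ : ∀ k, Z k ∈ D) (hW : W ∈ D)
    (h : WeakTendsto P Z W) :
    Tendsto (fun k => ∫ ω, Z k ω * X ω ∂P) atTop (nhds (∫ ω, W ω * X ω ∂P)) := by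
  rw [Metric.tendsto_atTop']
  intro ε hε
  obtain ⟨n, hn⟩ := (hX.2.eventually_lt_const
    (ENNReal.ofReal_pos.2 (show (0 : ℝ) < ε / 3 by positivity))).exists
  obtain ⟨N, hN⟩ := Metric.tendsto_atTop'.1
    (h (truncate X n) (measurable_truncate hX.1 n) ⟨n, abs_truncate_le X n⟩) (ε / 3) (by positivity)
  refine ⟨N, fun k hk => ?_⟩
  have h1 := abs_integral_sub_truncate_le hD hX (hZ k) hn.le (by positivity)
  have h2 := abs_integral_sub_truncate_le hD hX hW hn.le (by positivity)
  have h3 := hN k hk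
  rw [Real.dist_eq] at h3 ⊢
  rw [abs_le] at h1 h2
  rw [abs_lt] at h3 ⊢
  constructor <;> linarith

/-- The elements of `D` pricing every claim of `F` at a nonpositive value. -/
def priced (P : Measure Ω) (D F : Set (Ω → ℝ)) : Set (Ω → ℝ) :=
  {Z ∈ D | ∀ X ∈ F, ∫ ω, Z ω * X ω ∂P ≤ 0}

lemma priced_anti (P : Measure Ω) (D : Set (Ω → ℝ)) {F G : Set (Ω → ℝ)} (h : F ⊆ G) :
    priced P D G ⊆ priced P D F :=
  fun _ hZ => ⟨hZ.1, fun X hX => hZ.2 X (h hX)⟩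

lemma convex_priced {P : Measure Ω} {D : Set (Ω → ℝ)} (hD : D ⊆ Dens P) (hDconv : Convex ℝ D)
    {F : Set (Ω → ℝ)} (hF : F ⊆ Ls P D) : Convex ℝ (priced P D F) := by
  rintro Z hZ W hW a b ha hb hab
  refine ⟨hDconv hZ.1 hW.1 ha hb hab, fun X hX => ?_⟩
  have hi : ∫ ω, (a • Z + b • W) ω * X ω ∂P
      = a * (∫ ω, Z ω * X ω ∂P) + b * ∫ ω, W ω * X ω ∂P := by
    rw [← integral_const_mul, ← integral_const_mul, ← integral_add]
    · refine integral_congr_ae (Eventually.of_forall fun ω => ?_)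
      simp only [Pi.add_apply, Pi.smul_apply, smul_eq_mul]
      ring
    · exact (Ls.integrable_mul hD (hF hX) hZ.1).const_mul a
    · exact (Ls.integrable_mul hD (hF hX) hW.1).const_mul b
  rw [hi]
  nlinarith [hZ.2 X hX, hW.2 X hX]

/-- Finitely many claims of `Ls` from a convex set without good deals are priced by one density,
by separating the compact set of price vectors from the negative orthant. -/
lemma priced_range_nonempty {P : Measure Ω} {D : Set (Ω → ℝ)}
    (hD : D ⊆ Dens P) (hDne : D.Nonempty) (hDconv : Convex ℝ D) (hDcomp : WSeqCompact P D)
    {A : Set (Ω → ℝ)} (hAconv : Convex ℝ A) (hA : ¬∃ X ∈ A, 0 < cohU P D X)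
    {ι : Type*} [Finite ι] (X : ι → Ω → ℝ) (hX : ∀ i, X i ∈ A ∩ Ls P D) :
    (priced P D (range X)).Nonempty := by
  classical
  have := Fintype.ofFinite ι
  by_contra hempty
  have hint : ∀ Z ∈ D, ∀ i, Integrable (fun ω => Z ω * X i ω) P :=
    fun Z hZ i => Ls.integrable_mul hD (hX i).2 hZ
  let price : (Ω → ℝ) → ι → ℝ := fun Z i => ∫ ω, Z ω * X i ω ∂P
  have hKconv : Convex ℝ (price '' D) := by
    rintro _ ⟨Z, hZ, rfl⟩ _ ⟨W, hW, rfl⟩ a b ha hb hab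
    refine ⟨a • Z + b • W, hDconv hZ hW ha hb hab, ?_⟩
    ext i
    simp only [price, Pi.add_apply, Pi.smul_apply, smul_eq_mul]
    rw [← integral_const_mul, ← integral_const_mul,
      ← integral_add ((hint Z hZ i).const_mul a) ((hint W hW i).const_mul b)]
    refine integral_congr_ae (Eventually.of_forall fun ω => ?_)
    simp only
    ring
  have hKcomp : IsCompact (price '' D) := by
    refine IsSeqCompact.isCompact fun y hy => ?_
    choose Z hZ hZy using hy
    obtain ⟨W, hW, φ, hφ, hlim⟩ := hDcomp Z hZ
    refine ⟨price W, ⟨W, hW, rfl⟩, φ, hφ, tendsto_pi_nhds.2 fun i => ?_⟩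
    have := WeakTendsto.tendsto_integral_mul hD (hX i).2 (Z := Z ∘ φ) (fun k => hZ _) hW hlim
    simpa [← hZy, price, Function.comp_def] using this
  have hdisj : Disjoint (Iic (0 : ι → ℝ)) (price '' D) := by
    rw [Set.disjoint_left]
    rintro _ hy ⟨Z, hZ, rfl⟩
    refine hempty ⟨Z, hZ, ?_⟩
    rintro _ ⟨i, rfl⟩
    exact hy i
  obtain ⟨f, u, v, hu, huv, hv⟩ :=
    geometric_hahn_banach_closed_compact (convex_Iic (0 : ι → ℝ)) isClosed_Iic hKconv hKcomp hdisj
  have hu0 : 0 < u := by simpa using hu 0 (mem_Iic.2 le_rfl)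
  let c : ι → ℝ := fun i => f (Pi.single i 1)
  have hf : ∀ y : ι → ℝ, f y = ∑ i, c i * y i := by
    intro y
    conv_lhs => rw [pi_eq_sum_univ' y]
    simp only [map_sum, map_smul, smul_eq_mul, c, mul_comm]
  have hc : ∀ i, 0 ≤ c i := by
    intro i
    by_contra! hi
    have hneg : (-(u / -c i)) • (Pi.single i 1 : ι → ℝ) ∈ Iic (0 : ι → ℝ) := by
      intro j
      have : 0 ≤ u / -c i := div_nonneg hu0.le (by linarith)
      by_cases hij : j = i
      · subst hij; simpa using this
      · simp [hij]
    have h := hu _ hneg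
    rw [map_smul, smul_eq_mul] at h
    change -(u / -c i) * c i < u at h
    have : -(u / -c i) * c i = u := by
      have := hi.ne
      field_simp
    linarith
  have hs : 0 < ∑ i, c i := by
    refine (Finset.sum_nonneg fun i _ => hc i).lt_of_ne' fun h0 => ?_
    have hz := (Finset.sum_eq_zero_iff_of_nonneg fun i _ => hc i).1 h0
    obtain ⟨Z, hZ⟩ := hDne
    have h := hv _ ⟨Z, hZ, rfl⟩
    rw [hf, Finset.sum_eq_zero fun i hi => by rw [hz i hi, zero_mul]] at h
    linarith
  refine hA ⟨∑ i, (c i / ∑ j, c j) • X i, hAconv.sum_mem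
    (fun i _ => div_nonneg (hc i) hs.le) ?_ (fun i _ => (hX i).1), ?_⟩
  · rw [← Finset.sum_div, div_self hs.ne']
  · refine lt_of_lt_of_le (b := ((v / ∑ j, c j : ℝ) : EReal))
      (by exact_mod_cast div_pos (hu0.trans huv) hs) (le_iInf₂ fun Z hZ => ?_)
    have hfun : (fun ω => Z ω * (∑ i, (c i / ∑ j, c j) • X i) ω)
        = fun ω => ∑ i, (c i / ∑ j, c j) * (Z ω * X i ω) := by
      ext ω
      simp only [Finset.sum_apply, Pi.smul_apply, smul_eq_mul, Finset.mul_sum]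
      exact Finset.sum_congr rfl fun i _ => by ring
    have hterm : ∀ i ∈ Finset.univ,
        Integrable (fun ω => (c i / ∑ j, c j) * (Z ω * X i ω)) P :=
      fun i _ => (hint Z hZ i).const_mul _
    rw [eexp_eq_integral (by rw [hfun]; exact integrable_finsetSum _ hterm), EReal.coe_le_coe_iff,
      hfun, integral_finsetSum _ hterm]
    have h := hv _ ⟨Z, hZ, rfl⟩
    rw [hf] at h
    rw [div_le_iff₀ hs, Finset.sum_mul]
    refine h.le.trans (le_of_eq (Finset.sum_congr rfl fun i _ => ?_))
    rw [integral_const_mul]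
    simp only [price]
    field_simp

lemma priced_nonempty_of_countable {P : Measure Ω} {D : Set (Ω → ℝ)}
    (hD : D ⊆ Dens P) (hDne : D.Nonempty) (hDconv : Convex ℝ D) (hDcomp : WSeqCompact P D)
    {A : Set (Ω → ℝ)} (hAconv : Convex ℝ A) (hA : ¬∃ X ∈ A, 0 < cohU P D X)
    {F : Set (Ω → ℝ)} (hF : F ⊆ A ∩ Ls P D) (hFc : F.Countable) :
    (priced P D F).Nonempty := by
  rcases F.eq_empty_or_nonempty with rfl | hne
  · obtain ⟨Z, hZ⟩ := hDne
    exact ⟨Z, hZ, by simp⟩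
  obtain ⟨X, rfl⟩ := hFc.exists_eq_range hne
  have hX : ∀ i, X i ∈ A ∩ Ls P D := fun i => hF ⟨i, rfl⟩
  have hfin : ∀ n : ℕ, (priced P D (range fun i : Fin n => X i)).Nonempty := fun n =>
    priced_range_nonempty hD hDne hDconv hDcomp hAconv hA (fun i : Fin n => X i) fun i => hX i
  choose Z hZ using hfin
  obtain ⟨W, hW, φ, hφ, hlim⟩ := hDcomp Z fun n => (hZ n).1
  refine ⟨W, hW, ?_⟩
  rintro _ ⟨i, rfl⟩
  refine le_of_tendsto (WeakTendsto.tendsto_integral_mul hD (hX i).2 (Z := Z ∘ φ)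
    (fun k => (hZ _).1) hW hlim) ?_
  filter_upwards [eventually_gt_atTop i] with k hk
  exact (hZ (φ k)).2 _ ⟨⟨i, hk.trans_le (hφ.id_le k)⟩, rfl⟩

/-- A strictly convex functional of densities, finite on all of `L¹`. -/
noncomputable def arcEnergy (P : Measure Ω) (Z : Ω → ℝ) : ℝ := ∫ ω, √(1 + Z ω ^ 2) ∂P

lemma sqrt_one_add_sq_le (z : ℝ) : √(1 + z ^ 2) ≤ 1 + |z| := by
  rw [Real.sqrt_le_left (by positivity)]
  nlinarith [sq_abs z, abs_nonneg z]

lemma integrable_sqrt_one_add_sq {P : Measure Ω} [IsProbabilityMeasure P] {Z : Ω → ℝ}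
    (hZ : Z ∈ Dens P) : Integrable (fun ω => √(1 + Z ω ^ 2)) P := by
  refine ((integrable_const 1).add (Dens.integrable hZ).abs).mono'
    (hZ.1.pow_const 2 |>.const_add 1 |>.sqrt).aestronglyMeasurable (Eventually.of_forall fun ω => ?_)
  rw [Real.norm_of_nonneg (Real.sqrt_nonneg _)]
  exact sqrt_one_add_sq_le _

lemma arcEnergy_nonneg (P : Measure Ω) (Z : Ω → ℝ) : 0 ≤ arcEnergy P Z :=
  integral_nonneg fun _ => Real.sqrt_nonneg _

lemma arcEnergy_le_two {P : Measure Ω} [IsProbabilityMeasure P] {Z : Ω → ℝ}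
    (hZ : Z ∈ Dens P) : arcEnergy P Z ≤ 2 := by
  have hone : ∫ ω, Z ω ∂P = 1 := by
    rw [integral_eq_lintegral_of_nonneg_ae (Eventually.of_forall hZ.2.1)
      hZ.1.aestronglyMeasurable, hZ.2.2, ENNReal.toReal_one]
  have h : arcEnergy P Z ≤ ∫ ω, (1 + Z ω) ∂P := by
    refine integral_mono (integrable_sqrt_one_add_sq hZ)
      ((integrable_const 1).add (Dens.integrable hZ)) fun ω => ?_
    have := sqrt_one_add_sq_le (Z ω)
    rwa [abs_of_nonneg (hZ.2.1 ω)] at this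
  rw [integral_add (integrable_const 1) (Dens.integrable hZ), hone] at h
  simp at h
  linarith

lemma sqrt_one_add_sq_tangent (z w : ℝ) :
    √(1 + w ^ 2) + (z - w) * (w / √(1 + w ^ 2)) ≤ √(1 + z ^ 2) := by
  have hw : 0 < √(1 + w ^ 2) := by positivity
  have hw2 : √(1 + w ^ 2) ^ 2 = 1 + w ^ 2 := Real.sq_sqrt (by positivity)
  have h : 1 + z * w ≤ √(1 + z ^ 2) * √(1 + w ^ 2) := by
    rw [← Real.sqrt_mul (by positivity)]
    apply Real.le_sqrt_of_sq_le
    nlinarith [sq_nonneg (z - w)]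
  have heq : √(1 + w ^ 2) + (z - w) * (w / √(1 + w ^ 2)) = (1 + z * w) / √(1 + w ^ 2) := by
    field_simp
    rw [hw2]; ring
  rw [heq, div_le_iff₀ hw]
  exact h

lemma sqrt_one_add_sq_midpoint_lt {z w : ℝ} (h : z ≠ w) :
    √(1 + ((1 / 2 : ℝ) * z + (1 / 2 : ℝ) * w) ^ 2)
      < (1 / 2) * √(1 + z ^ 2) + (1 / 2) * √(1 + w ^ 2) := by
  have hz2 : √(1 + z ^ 2) ^ 2 = 1 + z ^ 2 := Real.sq_sqrt (by positivity)
  have hw2 : √(1 + w ^ 2) ^ 2 = 1 + w ^ 2 := Real.sq_sqrt (by positivity)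
  have hmul : 1 + z * w < √(1 + z ^ 2) * √(1 + w ^ 2) := by
    rw [← Real.sqrt_mul (by positivity)]
    apply Real.lt_sqrt_of_sq_lt
    nlinarith [sq_pos_of_ne_zero (sub_ne_zero.2 h)]
  rw [Real.sqrt_lt' (by positivity)]
  nlinarith

lemma WeakTendsto.arcEnergy_le {P : Measure Ω} [IsProbabilityMeasure P] {Z : ℕ → Ω → ℝ}
    {W : Ω → ℝ} (hZ : ∀ k, Z k ∈ Dens P) (hW : W ∈ Dens P) (h : WeakTendsto P Z W) {m : ℝ}
    (hm : Tendsto (fun k => arcEnergy P (Z k)) atTop (nhds m)) : arcEnergy P W ≤ m := by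
  let g : Ω → ℝ := fun ω => W ω / √(1 + W ω ^ 2)
  have hg : Measurable g := hW.1.div (hW.1.pow_const 2 |>.const_add 1 |>.sqrt)
  have hgb : ∀ ω, |g ω| ≤ 1 := by
    intro ω
    rw [abs_div, abs_of_nonneg (Real.sqrt_nonneg _), div_le_one (by positivity)]
    exact Real.abs_le_sqrt (by linarith)
  have hWg := Dens.integrable_mul_bounded hW hg hgb
  have hle : ∀ k, arcEnergy P W + ((∫ ω, Z k ω * g ω ∂P) - ∫ ω, W ω * g ω ∂P)
      ≤ arcEnergy P (Z k) := by
    intro k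
    have hZg := Dens.integrable_mul_bounded (hZ k) hg hgb
    have hsub : Integrable (fun ω => Z k ω * g ω - W ω * g ω) P := hZg.sub hWg
    rw [← integral_sub hZg hWg, arcEnergy, ← integral_add (integrable_sqrt_one_add_sq hW) hsub]
    refine integral_mono ((integrable_sqrt_one_add_sq hW).add hsub)
      (integrable_sqrt_one_add_sq (hZ k)) fun ω => ?_
    have := sqrt_one_add_sq_tangent (Z k ω) (W ω)
    rw [sub_mul] at this
    exact this
  have hlim := ((h g hg ⟨1, hgb⟩).sub_const (∫ ω, W ω * g ω ∂P)).const_add (arcEnergy P W)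
  rw [sub_self, add_zero] at hlim
  exact le_of_tendsto_of_tendsto' hlim hm hle

/-- Minimizers of `arcEnergy` on a convex set of densities are almost surely unique. -/
lemma arcEnergy_minimizer_unique {P : Measure Ω} [IsProbabilityMeasure P] {C : Set (Ω → ℝ)}
    (hC : C ⊆ Dens P) (hconv : Convex ℝ C) {Z W : Ω → ℝ} (hZ : Z ∈ C) (hW : W ∈ C)
    (hmin : ∀ V ∈ C, arcEnergy P Z ≤ arcEnergy P V) (heq : arcEnergy P W = arcEnergy P Z) :
    Z =ᵐ[P] W := by
  have hM : (1 / 2 : ℝ) • Z + (1 / 2 : ℝ) • W ∈ C :=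
    hconv hZ hW (by norm_num) (by norm_num) (by norm_num)
  have hiM := integrable_sqrt_one_add_sq (hC hM)
  have hiZ := (integrable_sqrt_one_add_sq (hC hZ)).const_mul (1 / 2)
  have hiW := (integrable_sqrt_one_add_sq (hC hW)).const_mul (1 / 2)
  have hle : (fun ω => √(1 + ((1 / 2 : ℝ) • Z + (1 / 2 : ℝ) • W) ω ^ 2)) ≤
      fun ω => (1 / 2) * √(1 + Z ω ^ 2) + (1 / 2) * √(1 + W ω ^ 2) := by
    intro ω
    simp only [Pi.add_apply, Pi.smul_apply, smul_eq_mul]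
    by_cases h : Z ω = W ω
    · rw [h]; ring_nf; exact le_rfl
    · exact (sqrt_one_add_sq_midpoint_lt h).le
  have hsum : ∫ ω, ((1 / 2) * √(1 + Z ω ^ 2) + (1 / 2) * √(1 + W ω ^ 2)) ∂P = arcEnergy P Z := by
    rw [integral_add hiZ hiW, integral_const_mul, integral_const_mul]
    change 1 / 2 * arcEnergy P Z + 1 / 2 * arcEnergy P W = _
    rw [heq]; ring
  have hint : ∫ ω, √(1 + ((1 / 2 : ℝ) • Z + (1 / 2 : ℝ) • W) ω ^ 2) ∂P
      = ∫ ω, ((1 / 2) * √(1 + Z ω ^ 2) + (1 / 2) * √(1 + W ω ^ 2)) ∂P :=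
    le_antisymm (integral_mono hiM (hiZ.add hiW) hle) (hsum.trans_le (hmin _ hM))
  filter_upwards [(integral_eq_iff_of_ae_le hiM (hiZ.add hiW)
    (Eventually.of_forall hle)).1 hint] with ω hω
  by_contra h
  exact (sqrt_one_add_sq_midpoint_lt h).ne (by simpa using hω)

lemma exists_arcEnergy_minimizer {P : Measure Ω} [IsProbabilityMeasure P] {D : Set (Ω → ℝ)}
    (hD : D ⊆ Dens P) (hDcomp : WSeqCompact P D) {F : Set (Ω → ℝ)} (hF : F ⊆ Ls P D)
    (hne : (priced P D F).Nonempty) :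
    ∃ Z ∈ priced P D F, arcEnergy P Z = sInf (arcEnergy P '' priced P D F) := by
  have hbdd : BddBelow (arcEnergy P '' priced P D F) :=
    ⟨0, by rintro _ ⟨Z, -, rfl⟩; exact arcEnergy_nonneg P Z⟩
  obtain ⟨y, -, hy, hymem⟩ := exists_seq_tendsto_sInf (hne.image (arcEnergy P)) hbdd
  choose Z hZ hZy using hymem
  obtain ⟨W, hW, φ, hφ, hlim⟩ := hDcomp Z fun n => (hZ n).1
  have hWF : W ∈ priced P D F := ⟨hW, fun X hX =>
    le_of_tendsto' (WeakTendsto.tendsto_integral_mul hD (hF hX) (Z := Z ∘ φ)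
      (fun k => (hZ _).1) hW hlim) fun k => (hZ (φ k)).2 X hX⟩
  refine ⟨W, hWF, le_antisymm ?_ (csInf_le hbdd ⟨W, hWF, rfl⟩)⟩
  refine WeakTendsto.arcEnergy_le (Z := Z ∘ φ) (fun k => hD (hZ _).1) (hD hW) hlim ?_
  simpa [Function.comp_def, hZy] using hy.comp hφ.tendsto_atTop

/-- If every countable subfamily of claims in `Ls` can be priced by an element of `D`,
then so can the whole family. -/
lemma priced_nonempty {P : Measure Ω} [IsProbabilityMeasure P] {D : Set (Ω → ℝ)}
    (hD : D ⊆ Dens P) (hDconv : Convex ℝ D) (hDcomp : WSeqCompact P D)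
    {B : Set (Ω → ℝ)} (hB : B ⊆ Ls P D)
    (hne : ∀ F ⊆ B, F.Countable → (priced P D F).Nonempty) :
    (priced P D B).Nonempty := by
  let m : Set (Ω → ℝ) → ℝ := fun F => sInf (arcEnergy P '' priced P D F)
  have hmin : ∀ F ⊆ B, F.Countable → ∃ Z ∈ priced P D F, arcEnergy P Z = m F :=
    fun F hF hFc => exists_arcEnergy_minimizer hD hDcomp (hF.trans hB) (hne F hF hFc)
  have hm_le : ∀ F, ∀ Z ∈ priced P D F, m F ≤ arcEnergy P Z := fun F Z hZ =>
    csInf_le ⟨0, by rintro _ ⟨V, -, rfl⟩; exact arcEnergy_nonneg P V⟩ ⟨Z, hZ, rfl⟩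
  have hmono : ∀ F G, F ⊆ G → G ⊆ B → G.Countable → m F ≤ m G := by
    intro F G hFG hG hGc
    obtain ⟨Z, hZ, hZm⟩ := hmin G hG hGc
    exact (hm_le F Z (priced_anti P D hFG hZ)).trans hZm.le
  let S : Set ℝ := m '' {F | F ⊆ B ∧ F.Countable}
  have hSbdd : BddAbove S := by
    refine ⟨2, ?_⟩
    rintro _ ⟨F, ⟨hF, hFc⟩, rfl⟩
    obtain ⟨Z, hZ, hZm⟩ := hmin F hF hFc
    exact hZm ▸ arcEnergy_le_two (hD hZ.1)
  obtain ⟨y, -, hy, hymem⟩ := exists_seq_tendsto_sSup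
    (S := S) ⟨m ∅, ∅, ⟨empty_subset _, countable_empty⟩, rfl⟩ hSbdd
  choose F hF hFy using hymem
  have hUB : (⋃ n, F n) ⊆ B := iUnion_subset fun n => (hF n).1
  have hUc : (⋃ n, F n).Countable := countable_iUnion fun n => (hF n).2
  have hUsup : sSup S ≤ m (⋃ n, F n) := le_of_tendsto' hy fun n =>
    hFy n ▸ hmono _ _ (subset_iUnion F n) hUB hUc
  obtain ⟨Z, hZ, hZm⟩ := hmin _ hUB hUc
  refine ⟨Z, hZ.1, fun X hX => ?_⟩
  have hVB : insert X (⋃ n, F n) ⊆ B := insert_subset hX hUB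
  have hVc : (insert X (⋃ n, F n)).Countable := hUc.insert X
  obtain ⟨W, hW, hWm⟩ := hmin _ hVB hVc
  have hWU := priced_anti P D (subset_insert X _) hW
  have heq : arcEnergy P W = arcEnergy P Z := by
    refine le_antisymm ?_ (hZm.trans_le (hm_le _ W hWU))
    rw [hWm, hZm]
    exact (le_csSup hSbdd ⟨_, ⟨hVB, hVc⟩, rfl⟩).trans hUsup
  have hae := arcEnergy_minimizer_unique (fun V hV => hD hV.1)
    (convex_priced hD hDconv (hUB.trans hB)) hZ hWU (fun V hV => hZm.trans_le (hm_le _ V hV)) heq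
  rw [integral_congr_ae (hae.mono fun ω hω => show Z ω * X ω = W ω * X ω by rw [hω])]
  exact hW.2 X (mem_insert X _)

/-- Fundamental Theorem of Asset Pricing, utility-based NGD.
For a convex weakly compact `D ⊆ 𝒫` and a convex `D`-consistent set `A ⊆ L⁰` of attainable
P&Ls, there is no good deal (no `X ∈ A` with `u(X) > 0`) iff `D ∩ ℛ(A) ≠ ∅`. -/
theorem stmt_11 (P : Measure Ω) [IsProbabilityMeasure P] (D : Set (Ω → ℝ))
    (hDsub : D ⊆ Dens P) (hDne : D.Nonempty) (hDconv : Convex ℝ D)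
    (hDcomp : WSeqCompact P D) (A : Set (Ω → ℝ)) (hAmeas : ∀ X ∈ A, Measurable X)
    (hAconv : Convex ℝ A) (hAcons : DConsistent P D A) :
    (¬∃ X ∈ A, 0 < cohU P D X) ↔ (D ∩ RiskNeutral P A).Nonempty := by
  constructor
  · intro hA
    obtain ⟨B, hB, hBeq⟩ := hAcons
    have hBLs : B ⊆ Ls P D := fun X hX => (hB hX).2
    obtain ⟨Z, hZ, hZB⟩ := priced_nonempty hDsub hDconv hDcomp hBLs fun F hF hFc =>
      priced_nonempty_of_countable hDsub hDne hDconv hDcomp hAconv hA (hF.trans hB) hFc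
    rw [hBeq]
    refine ⟨Z, hZ, hDsub hZ, fun X hX => ?_⟩
    rw [eexp_eq_integral (Ls.integrable_mul hDsub (hBLs hX) hZ)]
    exact_mod_cast hZB X hX
  · rintro ⟨Z, hZ, -, hZA⟩ ⟨X, hX, hpos⟩
    exact (hpos.trans_le ((iInf₂_le Z hZ).trans (hZA X hX))).false
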